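/- Let n ≥ 1 and let α be an element of the Motzkin monoid M_n. Then α is idempotent (α² = α) if and only if every connected component of the interface graph Γ(α) is a cycle, an inert path, or a trans-active path. -/

import Mathlib

open Relation

/-! ### The partition monoid and its planar submonoids -/

/-- Vertices of a partition diagram: `Sum.inl i` is the upper vertex `i`,
`Sum.inr i` is the lower vertex `i′`. -/
abbrev PV (n : ℕ) := Fin n ⊕ Fin n

/-- An element of the partition monoid `P_n`: a set partition of the `2n` vertices,
encoded as an equivalence relation (setoid). -/
abbrev PElt (n : ℕ) := Setoid (PV n)

/-- Three layers of vertices, used to form products. -/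
abbrev TV (n : ℕ) := Fin n ⊕ (Fin n ⊕ Fin n)

/-- Embedding of the vertices of the upper factor into the three layers. -/
def upEmb {n : ℕ} : PV n → TV n
  | .inl i => .inl i
  | .inr i => .inr (.inl i)

/-- Embedding of the vertices of the lower factor into the three layers. -/
def downEmb {n : ℕ} : PV n → TV n
  | .inl i => .inr (.inl i)
  | .inr i => .inr (.inr i)

/-- Embedding of the vertices of the product into the three layers. -/
def outEmb {n : ℕ} : PV n → TV n
  | .inl i => .inl i
  | .inr i => .inr (.inr i)

/-- The stacked graph of `a` on `b`: relations of `a` on layers 1–2 together with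
relations of `b` on layers 2–3. -/
def stackRel {n : ℕ} (a b : PElt n) : TV n → TV n → Prop := fun x y =>
  (∃ p q : PV n, a.r p q ∧ x = upEmb p ∧ y = upEmb q) ∨
  (∃ p q : PV n, b.r p q ∧ x = downEmb p ∧ y = downEmb q)

/-- The finest common coarsening (transitive closure) of the stacked graph. -/
def stackSetoid {n : ℕ} (a b : PElt n) : Setoid (TV n) :=
  EqvGen.setoid (stackRel a b)

/-- The product in the partition monoid: restrict the coarsening of the stacked graph
to the outer two layers. -/
def pmul {n : ℕ} (a b : PElt n) : PElt n :=
  Setoid.comap outEmb (stackSetoid a b)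

/-- The identity of the partition monoid: blocks `{i, i′}`. -/
def pid (n : ℕ) : PElt n :=
  ⟨fun x y => Sum.elim id id x = Sum.elim id id y,
    ⟨fun _ => rfl, fun h => h.symm, fun h₁ h₂ => h₁.trans h₂⟩⟩

/-- A vertex of the triple-layer graph lies in the identified middle row. -/
def isMiddle {n : ℕ} : TV n → Prop
  | .inr (.inl _) => True
  | _ => False

/-- `m(a,b)`: the number of floating components (components of the stacked graph of `a` on `b`
contained entirely in the identified middle row). -/
noncomputable def floatCount {n : ℕ} (a b : PElt n) : ℕ :=
  Nat.card {c : Quotient (stackSetoid a b) //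
    ∀ x : TV n, Quotient.mk (stackSetoid a b) x = c → isMiddle x}

/-- A block (equivalence class) is a transversal if it contains both an upper
and a lower vertex. -/
def IsTransClass {n : ℕ} (a : PElt n) (c : Quotient a) : Prop :=
  (∃ i : Fin n, Quotient.mk a (.inl i) = c) ∧ (∃ j : Fin n, Quotient.mk a (.inr j) = c)

/-- The rank of a partition: the number of transversal blocks. -/
noncomputable def prank {n : ℕ} (a : PElt n) : ℕ :=
  Nat.card {c : Quotient a // IsTransClass a c}

/-- Position of a vertex in the boundary order `1, …, n, n′, …, 1′` of the rectangle. -/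
def ordIdx (n : ℕ) : PV n → ℕ
  | .inl i => i.val
  | .inr i => 2 * n - 1 - i.val

/-- Planarity: the partition is non-crossing with respect to the boundary order
`1 < ⋯ < n < n′ < ⋯ < 1′`. -/
def IsPlanar {n : ℕ} (a : PElt n) : Prop :=
  ¬ ∃ w x y z : PV n, ordIdx n w < ordIdx n x ∧ ordIdx n x < ordIdx n y ∧
      ordIdx n y < ordIdx n z ∧ a.r w y ∧ a.r x z ∧ ¬ a.r w x

/-- The size of the block containing a given vertex. -/
noncomputable def blockCard {n : ℕ} (a : PElt n) (x : PV n) : ℕ :=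
  Nat.card {y : PV n // a.r x y}

/-- The Motzkin monoid: planar partitions with all blocks of size at most 2. -/
def Motzkin (n : ℕ) : Set (PElt n) :=
  {a | IsPlanar a ∧ ∀ x : PV n, blockCard a x ≤ 2}

/-- The Jones (Temperley–Lieb) monoid: planar partitions with all blocks of size
exactly 2. -/
def Jones (n : ℕ) : Set (PElt n) :=
  {a | IsPlanar a ∧ ∀ x : PV n, blockCard a x = 2}

/-! ### The interface graph -/

/-- Lower edge of the interface graph `Γ(a)`: a block `{i,j}` of `a` on upper vertices. -/
def LowEdge {n : ℕ} (a : PElt n) (i j : Fin n) : Prop :=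
  i ≠ j ∧ a.r (.inl i) (.inl j)

/-- Upper edge of the interface graph `Γ(a)`: a block `{i′,j′}` of `a` on lower vertices. -/
def UpEdge {n : ℕ} (a : PElt n) (i j : Fin n) : Prop :=
  i ≠ j ∧ a.r (.inr i) (.inr j)

/-- Vertex `i` of `Γ(a)` carries a lower edge. -/
def hasLow {n : ℕ} (a : PElt n) (i : Fin n) : Prop := ∃ j, LowEdge a i j

/-- Vertex `i` of `Γ(a)` carries an upper edge. -/
def hasUp {n : ℕ} (a : PElt n) (i : Fin n) : Prop := ∃ j, UpEdge a i j

/-- Vertex `i` is active downwards: the upper vertex `i` lies in a transversal of `a`. -/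
def activeDown {n : ℕ} (a : PElt n) (i : Fin n) : Prop := ∃ j : Fin n, a.r (.inl i) (.inr j)

/-- Vertex `i` is active upwards: the lower vertex `i′` lies in a transversal of `a`. -/
def activeUp {n : ℕ} (a : PElt n) (i : Fin n) : Prop := ∃ j : Fin n, a.r (.inr i) (.inl j)

/-- Vertex `i` is inert downwards: the upper vertex `i` is a singleton block of `a`. -/
def inertDown {n : ℕ} (a : PElt n) (i : Fin n) : Prop := ∀ y, a.r (.inl i) y → y = .inl i

/-- Vertex `i` is inert upwards: the lower vertex `i′` is a singleton block of `a`. -/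
def inertUp {n : ℕ} (a : PElt n) (i : Fin n) : Prop := ∀ y, a.r (.inr i) y → y = .inr i

/-- Adjacency in the interface graph `Γ(a)`. -/
def gedge {n : ℕ} (a : PElt n) (i j : Fin n) : Prop := LowEdge a i j ∨ UpEdge a i j

/-- Connectivity in the interface graph `Γ(a)`. -/
def gconn {n : ℕ} (a : PElt n) : Fin n → Fin n → Prop := EqvGen (gedge a)

/-- `θ` is (the vertex set of) a connected component of `Γ(a)`. -/
def IsComp {n : ℕ} (a : PElt n) (θ : Set (Fin n)) : Prop :=
  θ.Nonempty ∧ ∀ i ∈ θ, ∀ j : Fin n, (gconn a i j ↔ j ∈ θ)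

/-- `θ` is a cycle component of `Γ(a)`: every vertex carries both a lower and an upper edge. -/
def IsCycleComp {n : ℕ} (a : PElt n) (θ : Set (Fin n)) : Prop :=
  IsComp a θ ∧ ∀ i ∈ θ, hasLow a i ∧ hasUp a i

/-- `θ` is a path component of `Γ(a)`: some vertex misses an edge on some side. -/
def IsPathComp {n : ℕ} (a : PElt n) (θ : Set (Fin n)) : Prop :=
  IsComp a θ ∧ ∃ i ∈ θ, ¬ hasLow a i ∨ ¬ hasUp a i

/-- An inert path: every terminus is inert on its free side. -/
def IsInertPathComp {n : ℕ} (a : PElt n) (θ : Set (Fin n)) : Prop :=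
  IsPathComp a θ ∧ ∀ i ∈ θ,
    (¬ hasLow a i → inertDown a i) ∧ (¬ hasUp a i → inertUp a i)

/-- A trans-active path: even length (its two free ends lie on opposite sides) with
both termini active on their free sides. -/
def IsTransActivePathComp {n : ℕ} (a : PElt n) (θ : Set (Fin n)) : Prop :=
  IsPathComp a θ ∧
  (∃! i : Fin n, i ∈ θ ∧ ¬ hasLow a i) ∧ (∃! i : Fin n, i ∈ θ ∧ ¬ hasUp a i) ∧
  ∀ i ∈ θ, (¬ hasLow a i → activeDown a i) ∧ (¬ hasUp a i → activeUp a i)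

/-- The number of edges of `Γ(a)` contained in `θ` (its length, for a component `θ`). -/
noncomputable def compEdgeCount {n : ℕ} (a : PElt n) (θ : Set (Fin n)) : ℕ :=
  Nat.card {p : Fin n × Fin n // p.1 < p.2 ∧ p.1 ∈ θ ∧ p.2 ∈ θ ∧ LowEdge a p.1 p.2} +
  Nat.card {p : Fin n × Fin n // p.1 < p.2 ∧ p.1 ∈ θ ∧ p.2 ∈ θ ∧ UpEdge a p.1 p.2}

/-! ### The map `α ↦ α̂` and the sets `D`, `Θ(δ)` -/

/-- The 0-based position of `i` among the upward-active vertices. -/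
noncomputable def posUp {n : ℕ} (a : PElt n) (i : Fin n) : ℕ :=
  Nat.card {j : Fin n // j < i ∧ activeUp a j}

/-- The 0-based position of `i` among the downward-active vertices. -/
noncomputable def posDown {n : ℕ} (a : PElt n) (i : Fin n) : ℕ :=
  Nat.card {j : Fin n // j < i ∧ activeDown a j}

/-- `i` and `j` are consecutive upward-active vertices paired in forming `α̂`
(`i` in an even position `2t`, `j` in position `2t+1 < 2⌊r/2⌋`). -/
noncomputable def pairedUp {n : ℕ} (a : PElt n) (i j : Fin n) : Prop :=
  activeUp a i ∧ activeUp a j ∧ Even (posUp a i) ∧ posUp a j = posUp a i + 1 ∧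
    posUp a j < 2 * (prank a / 2)

/-- `i` and `j` are consecutive downward-active vertices paired in forming `α̂`. -/
noncomputable def pairedDown {n : ℕ} (a : PElt n) (i j : Fin n) : Prop :=
  activeDown a i ∧ activeDown a j ∧ Even (posDown a i) ∧ posDown a j = posDown a i + 1 ∧
    posDown a j < 2 * (prank a / 2)

/-- The transversal relations removed in forming `α̂` (those of the first `2⌊r/2⌋`
transversals). -/
noncomputable def removedTrans {n : ℕ} (a : PElt n) (x y : PV n) : Prop :=
  ∃ i j : Fin n, a.r (.inl i) (.inr j) ∧ posDown a i < 2 * (prank a / 2) ∧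
    ((x = .inl i ∧ y = .inr j) ∨ (x = .inr j ∧ y = .inl i))

/-- The generating relation of `α̂`: the relations of `α` minus the removed transversals,
plus the new blocks pairing consecutive active vertices. -/
noncomputable def hatRel {n : ℕ} (a : PElt n) (x y : PV n) : Prop :=
  (a.r x y ∧ ¬ removedTrans a x y) ∨
  (∃ i j : Fin n, pairedUp a i j ∧
      ((x = .inr i ∧ y = .inr j) ∨ (x = .inr j ∧ y = .inr i))) ∨
  (∃ i j : Fin n, pairedDown a i j ∧
      ((x = .inl i ∧ y = .inl j) ∨ (x = .inl j ∧ y = .inl i)))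

/-- The element `α̂` obtained from `α` by pairing off consecutive active vertices. -/
noncomputable def hat {n : ℕ} (a : PElt n) : PElt n := EqvGen.setoid (hatRel a)

/-- The idempotents of a subset `S` (with respect to the partition product). -/
def Eset {n : ℕ} (S : Set (PElt n)) : Set (PElt n) := {a ∈ S | pmul a a = a}

/-- `D(S) = D₀ ∪ E(D₁)`: the idempotents of `S` of rank at most 1. -/
def Dset {n : ℕ} (S : Set (PElt n)) : Set (PElt n) :=
  {d ∈ S | pmul d d = d ∧ prank d ≤ 1}

/-- `θ` lies (entirely) to the left of the leftmost transversal of `a`. -/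
def LeftOfTrans {n : ℕ} (a : PElt n) (θ : Set (Fin n)) : Prop :=
  ∀ i ∈ θ, ∀ j : Fin n, activeDown a j ∨ activeUp a j → i < j

/-- `Θ(a)`: the cycle components of `Γ(a)` lying entirely to the left of the leftmost
transversal. -/
def ThetaSet {n : ℕ} (a : PElt n) : Set (Set (Fin n)) :=
  {θ | IsCycleComp a θ ∧ LeftOfTrans a θ}

/-! ### Returns, special pairs and `θ`-covers -/

/-- The block `{i,j}` of `a` on upper vertices is an upper return: no upper block
`{k,l}` has `k<i<j<l`, and no transversal contains an upper vertex smaller than `i`. -/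
def UpperReturn {n : ℕ} (a : PElt n) (i j : Fin n) : Prop :=
  i < j ∧ a.r (.inl i) (.inl j) ∧
  (¬ ∃ k l : Fin n, k < i ∧ j < l ∧ a.r (.inl k) (.inl l)) ∧
  (¬ ∃ k : Fin n, k < i ∧ activeDown a k)

/-- The block `{i′,j′}` of `a` on lower vertices is a lower return. -/
def LowerReturn {n : ℕ} (a : PElt n) (i j : Fin n) : Prop :=
  i < j ∧ a.r (.inr i) (.inr j) ∧
  (¬ ∃ k l : Fin n, k < i ∧ j < l ∧ a.r (.inr k) (.inr l)) ∧
  (¬ ∃ k : Fin n, k < i ∧ activeUp a k)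

/-- The interface-graph adjacency of `a` after deleting the lower-vertex block `{i′,j′}`
and the upper-vertex block `{k,l}`. -/
def redEdge {n : ℕ} (a : PElt n) (i j k l : Fin n) (u v : Fin n) : Prop :=
  (LowEdge a u v ∧ ({u, v} : Set (Fin n)) ≠ {k, l}) ∨
  (UpEdge a u v ∧ ({u, v} : Set (Fin n)) ≠ {i, j})

/-- The relation generating the `θ`-cover `a − (e′,f)`, for `e′ = {i′,j′}` and
`f = {k,l}`: delete the two blocks, and join each freed upper vertex to the freed lower
vertex reached along its path. -/
def coverRel {n : ℕ} (a : PElt n) (i j k l : Fin n) (x y : PV n) : Prop :=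
  (a.r x y ∧ ({x, y} : Set (PV n)) ≠ {.inl k, .inl l} ∧
    ({x, y} : Set (PV n)) ≠ {.inr i, .inr j}) ∨
  (∃ u v : Fin n, u ∈ ({k, l} : Set (Fin n)) ∧ v ∈ ({i, j} : Set (Fin n)) ∧
    EqvGen (redEdge a i j k l) u v ∧
    ((x = .inl u ∧ y = .inr v) ∨ (x = .inr v ∧ y = .inl u)))

/-- The `θ`-cover `a − (e′,f)` as a partition. -/
def coverElt {n : ℕ} (a : PElt n) (i j k l : Fin n) : PElt n :=
  EqvGen.setoid (coverRel a i j k l)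

/-- `b` is a `θ`-cover of `a`: `θ ∈ Θ(a)` and `b = a − (e′,f)` for some special pair
`(e′,f)` over `θ` (one lower-return and one upper-return edge of `θ`). -/
def IsThetaCover {n : ℕ} (a : PElt n) (θ : Set (Fin n)) (b : PElt n) : Prop :=
  θ ∈ ThetaSet a ∧
  ∃ i j k l : Fin n, i ∈ θ ∧ j ∈ θ ∧ k ∈ θ ∧ l ∈ θ ∧
    LowerReturn a i j ∧ UpperReturn a k l ∧ b = coverElt a i j k l

/-- `a ≪_d b`: `a = b` or there is a chain of `θ`-covers from `a` to `b` along pairwise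
distinct cycles `θ ∈ Θ(d)`. -/
def llRel {n : ℕ} (d : PElt n) (a b : PElt n) : Prop :=
  a = b ∨ ∃ (h : ℕ) (θs : Fin h → Set (Fin n)) (as : Fin (h + 1) → PElt n),
    Function.Injective θs ∧ (∀ ι, θs ι ∈ ThetaSet d) ∧
    as 0 = a ∧ as (Fin.last h) = b ∧
    ∀ ι : Fin h, IsThetaCover (as ι.castSucc) (θs ι) (as ι.succ)

/-- The fibre `F_d = {α ∈ E(S) : α̂ = d}`. -/
def Fib {n : ℕ} (S : Set (PElt n)) (d : PElt n) : Set (PElt n) :=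
  {a ∈ Eset S | hat a = d}

/-- `C_d(θ) = C*_d(θ) ∪ {d}`, where `C*_d(θ)` is the set of `θ`-covers of `d`. -/
def CoverSet {n : ℕ} (d : PElt n) (θ : Set (Fin n)) : Set (PElt n) :=
  insert d {b | IsThetaCover d θ b}

/-- `u_θ`: the number of upper-return blocks among the edges of `θ`. -/
noncomputable def uRet {n : ℕ} (a : PElt n) (θ : Set (Fin n)) : ℕ :=
  Nat.card {p : Fin n × Fin n // p.1 ∈ θ ∧ p.2 ∈ θ ∧ UpperReturn a p.1 p.2}

/-- `l_θ`: the number of lower-return blocks among the edges of `θ`. -/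
noncomputable def lRet {n : ℕ} (a : PElt n) (θ : Set (Fin n)) : ℕ :=
  Nat.card {p : Fin n × Fin n // p.1 ∈ θ ∧ p.2 ∈ θ ∧ LowerReturn a p.1 p.2}

/-! ### Twisted semigroup algebras -/

variable {K : Type} [Field K]

/-- The underlying vector space of the semigroup algebra `k[P_n]`. -/
abbrev PAlg (n : ℕ) (K : Type) [Field K] := PElt n →₀ K

/-- The twisted multiplication on `k[P_n]`: on basis elements,
`a ∘ b = ξ^{m(a,b)} · (ab)`, extended bilinearly. -/
noncomputable def twistMul {n : ℕ} (ξ : K) (f g : PAlg n K) : PAlg n K :=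
  f.sum fun a ca => g.sum fun b cb =>
    Finsupp.single (pmul a b) (ca * cb * ξ ^ floatCount a b)

/-- The twisted variant `S^ξ`: the subsemigroup of `(k[S], ∘)` generated by (the basis
elements corresponding to) `S`. -/
def TwistedVariant {n : ℕ} (ξ : K) (S : Set (PElt n)) : Set (PAlg n K) :=
  ⋂₀ {T : Set (PAlg n K) | (∀ a ∈ S, Finsupp.single a (1 : K) ∈ T) ∧
      ∀ f ∈ T, ∀ g ∈ T, twistMul ξ f g ∈ T}

/-- The idempotents of a set of elements of the twisted algebra. -/
def EsetTwist {n : ℕ} (ξ : K) (X : Set (PAlg n K)) : Set (PAlg n K) :=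
  {f ∈ X | twistMul ξ f f = f}

/-- `⟨S^ξ, ξ·1⟩ = {ξ^i·α : i ∈ ℕ, α ∈ S}`. -/
def TwistNat {n : ℕ} (ξ : K) (S : Set (PElt n)) : Set (PAlg n K) :=
  {f | ∃ (i : ℕ), ∃ a ∈ S, f = Finsupp.single a (ξ ^ i)}

/-- `⟨S^ξ, ξ·1, ξ⁻¹·1⟩ = {ξ^i·α : i ∈ ℤ, α ∈ S}`. -/
def TwistInt {n : ℕ} (ξ : K) (S : Set (PElt n)) : Set (PAlg n K) :=
  {f | ∃ (i : ℤ), ∃ a ∈ S, f = Finsupp.single a (ξ ^ i)}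

/-! ### Idempotent statistics of the Jones monoid -/

/-- The number of cycle components of `Γ(a)`. -/
noncomputable def numCycles {n : ℕ} (a : PElt n) : ℕ :=
  Nat.card {θ : Set (Fin n) // IsCycleComp a θ}

/-- The number of path components of `Γ(a)`. -/
noncomputable def numPaths {n : ℕ} (a : PElt n) : ℕ :=
  Nat.card {θ : Set (Fin n) // IsPathComp a θ}

/-- `E_{n;c,p}`: the idempotents of the Jones monoid `J_n` with `c` cycle components and
`p` path components (out-of-range indices give the empty set). -/
def EJcp (n : ℕ) (c p : ℤ) : Set (PElt n) :=
  {a ∈ Jones n | pmul a a = a ∧ (numCycles a : ℤ) = c ∧ (numPaths a : ℤ) = p}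

/-- `e_{n;c,p} = |E_{n;c,p}|`. -/
noncomputable def eJ (n : ℕ) (c p : ℤ) : ℕ := Nat.card (EJcp n c p)

/-- `e_{n;·,p} = Σ_c e_{n;c,p}`: the number of idempotents of `J_n` of rank `p`. -/
noncomputable def eJdot (n : ℕ) (p : ℤ) : ℕ :=
  Nat.card {a : PElt n | a ∈ Jones n ∧ pmul a a = a ∧ (numPaths a : ℤ) = p}

/-- `S^{(1)}_{n;c,p} = Σ_{α ∈ E_{n;c,p}} Σ_{θ ∈ Θ(α)} (u_θ + l_θ)`. -/
noncomputable def S1 (n : ℕ) (c p : ℤ) : ℕ :=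
  ∑ᶠ a ∈ EJcp n c p, ∑ᶠ θ ∈ ThetaSet a, (uRet a θ + lRet a θ)

/-- `S^{(2)}_{n;c,p} = Σ_{α ∈ E_{n;c,p}} Σ_{θ₁ ≠ θ₂ ∈ Θ(α)} u_{θ₁}·l_{θ₂}`
(the inner sum over ordered pairs of distinct cycles). -/
noncomputable def S2 (n : ℕ) (c p : ℤ) : ℕ :=
  ∑ᶠ a ∈ EJcp n c p, ∑ᶠ q ∈ {q : Set (Fin n) × Set (Fin n) |
      q.1 ∈ ThetaSet a ∧ q.2 ∈ ThetaSet a ∧ q.1 ≠ q.2}, uRet a q.1 * lRet a q.2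

/-- `S^{(1)}_{n;·,p}`. -/
noncomputable def S1dot (n : ℕ) (p : ℤ) : ℕ :=
  ∑ᶠ a ∈ {a : PElt n | a ∈ Jones n ∧ pmul a a = a ∧ (numPaths a : ℤ) = p},
    ∑ᶠ θ ∈ ThetaSet a, (uRet a θ + lRet a θ)

/-- `S^{(2)}_{n;·,p}`. -/
noncomputable def S2dot (n : ℕ) (p : ℤ) : ℕ :=
  ∑ᶠ a ∈ {a : PElt n | a ∈ Jones n ∧ pmul a a = a ∧ (numPaths a : ℤ) = p},
    ∑ᶠ q ∈ {q : Set (Fin n) × Set (Fin n) |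
      q.1 ∈ ThetaSet a ∧ q.2 ∈ ThetaSet a ∧ q.1 ≠ q.2}, uRet a q.1 * lRet a q.2

/-!
Idempotency of `α` and the condition on the components of `Γ(α)` are both equivalent to the
statement that the ends `p` and `q` of every transversal `{p, q′}` are joined by a path of `Γ(α)`.
Indeed `Γ(α)` is the middle row of the stacked diagram of `αα`, so these paths are what turns two
copies of a transversal into one.

A vertex of `Γ(α)` has at most one edge on each side, so a component has at most two termini. If it
joins the ends of a transversal, these are its only termini and it is trans-active; if it has no
active vertex, it is a cycle or an inert path. Conversely, suppose that every component with an
upward active vertex is a trans-active path. By planarity, an edge off such a path encloses an even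
number of its points, so the parity of the number of its points to the left is constant along any
other component. Hence the paths preserve the left-to-right order of their ends, as transversals do.
Following first a path and then a transversal is therefore a strictly increasing self-map of the
finite set of upward active vertices, hence the identity.
-/

section MatchingParity

variable {V : Type*} {G H : SimpleGraph V}

lemma even_ncard_of_forall_exists_adj [Finite V] (hG : ∀ v, (G.neighborSet v).Subsingleton)
    {S : Set V} (hS : ∀ v ∈ S, ∃ w ∈ S, G.Adj v w) : Even S.ncard := by
  classical
  have := Fintype.ofFinite V
  have hM : ((⊤ : G.Subgraph).induce S).IsMatching := fun v hv => by
    obtain ⟨w, hwS, hvw⟩ := hS v hv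
    exact ⟨w, ⟨hv, hwS, hvw⟩, fun u hu => hG v hu.2.2 hvw⟩
  rw [Set.ncard_eq_toFinset_card']
  exact hM.even_card

lemma odd_ncard_iff_mem_of_unique_isolated [Finite V]
    (hG : ∀ v, (G.neighborSet v).Subsingleton) {S : Set V} {q : V}
    (hclosed : ∀ v ∈ S, ∀ w, G.Adj v w → w ∈ S)
    (hisolated : ∀ v ∈ S, (∃ w, G.Adj v w) ↔ v ≠ q) : Odd S.ncard ↔ q ∈ S := by
  have heven : Even (S \ {q}).ncard := even_ncard_of_forall_exists_adj hG fun v hv => by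
    obtain ⟨w, hvw⟩ := (hisolated v hv.1).2 hv.2
    have hw : w ∈ S := hclosed v hv.1 w hvw
    exact ⟨w, ⟨hw, (hisolated w hw).1 ⟨v, hvw.symm⟩⟩, hvw⟩
  by_cases hq : q ∈ S
  · rw [← Set.ncard_sdiff_singleton_add_one hq]
    exact iff_of_true heven.add_one hq
  · rw [Set.sdiff_singleton_eq_self hq] at heven
    exact iff_of_false (Nat.not_odd_iff_even.2 heven) hq

/-- A matching `G` on the points of a line is noncrossing relative to a set `A` of active points
if its edges, drawn as arcs on one side of the line, can be drawn disjointly from each other and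
from rays that leave the active points on that side. Here `G` and `A` model the edges and the
active vertices of an interface graph on one of its two sides. -/
structure IsNoncrossingMatching [LinearOrder V] (G : SimpleGraph V) (A : V → Prop) : Prop where
  subsingleton_neighborSet : ∀ v, (G.neighborSet v).Subsingleton
  mem_Icc : ∀ ⦃i j⦄, G.Adj i j → ∀ v ∈ Set.Ioo i j, ∀ w, G.Adj v w → w ∈ Set.Icc i j
  not_active : ∀ ⦃i j⦄, G.Adj i j → ∀ v ∈ Set.Ioo i j, ¬ A v

/-- The trace of a path on one side of the line: `γ` is a union of edges of the matching `G` and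
of a single active point `q` without an edge. -/
structure IsActiveStrand (G : SimpleGraph V) (A : V → Prop) (γ : Set V) (q : V) : Prop where
  closed : ∀ v ∈ γ, ∀ w, G.Adj v w → w ∈ γ
  mem : q ∈ γ
  exists_adj_iff : ∀ v ∈ γ, (∃ w, G.Adj v w) ↔ v ≠ q
  active : A q

variable [Finite V] [LinearOrder V] {A B : V → Prop} {γ : Set V} {p q r : V}

lemma IsActiveStrand.even_ncard_inter_Ioo (hγ : IsActiveStrand G A γ q)
    (hG : IsNoncrossingMatching G A) {i j : V} (hij : G.Adj i j) (hi : i ∉ γ) :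
    Even (γ ∩ Set.Ioo i j).ncard := by
  have hj : j ∉ γ := fun hj => hi (hγ.closed j hj i hij.symm)
  have hq : q ∉ γ ∩ Set.Ioo i j := fun hq => hG.not_active hij q hq.2 hγ.active
  rw [← Nat.not_odd_iff_even,
    odd_ncard_iff_mem_of_unique_isolated hG.subsingleton_neighborSet _
      fun v hv => hγ.exists_adj_iff v hv.1]
  · exact hq
  · intro v hv w hvw
    have hw : w ∈ γ := hγ.closed v hv.1 w hvw
    obtain ⟨hiw, hwj⟩ := hG.mem_Icc hij v hv.2 w hvw
    exact ⟨hw, hiw.lt_of_ne fun h => hi (h ▸ hw), hwj.lt_of_ne fun h => hj (h ▸ hw)⟩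

lemma IsActiveStrand.odd_ncard_inter_Iio_iff_of_adj (hγ : IsActiveStrand G A γ q)
    (hG : IsNoncrossingMatching G A) {i j : V} (hij : G.Adj i j) (hi : i ∉ γ) :
    Odd (γ ∩ Set.Iio i).ncard ↔ Odd (γ ∩ Set.Iio j).ncard := by
  wlog hlt : i < j generalizing i j
  · exact (this hij.symm (fun hj => hi (hγ.closed j hj i hij.symm))
      ((not_lt.1 hlt).lt_of_ne hij.ne')).symm
  have hsplit : γ ∩ Set.Iio j = γ ∩ Set.Iio i ∪ γ ∩ Set.Ioo i j := by
    ext v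
    have hvi : v ∈ γ → v ≠ i := fun hv h => hi (h ▸ hv)
    grind
  have hdisj : Disjoint (γ ∩ Set.Iio i) (γ ∩ Set.Ioo i j) :=
    Set.disjoint_left.2 fun v hv hv' => lt_asymm hv.2 hv'.2.1
  rw [hsplit, Set.ncard_union_eq hdisj, Nat.odd_add]
  exact (iff_true_right (hγ.even_ncard_inter_Ioo hG hij hi)).symm

lemma IsActiveStrand.odd_ncard_inter_Iio_iff_lt (hγ : IsActiveStrand G A γ q)
    (hG : IsNoncrossingMatching G A) (hr : A r) (hrγ : r ∉ γ) :
    Odd (γ ∩ Set.Iio r).ncard ↔ q < r := by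
  rw [odd_ncard_iff_mem_of_unique_isolated hG.subsingleton_neighborSet _
    fun v hv => hγ.exists_adj_iff v hv.1]
  · exact and_iff_right hγ.mem
  · intro v hv w hvw
    have hw : w ∈ γ := hγ.closed v hv.1 w hvw
    refine ⟨hw, lt_of_not_ge fun hrw => ?_⟩
    have hrw' : r < w := hrw.lt_of_ne fun h => hrγ (h ▸ hw)
    exact hG.not_active hvw r ⟨hv.2, hrw'⟩ hr

lemma IsActiveStrand.lt_iff_lt (hγG : IsActiveStrand G A γ p) (hγH : IsActiveStrand H B γ q)
    (hG : IsNoncrossingMatching G A) (hH : IsNoncrossingMatching H B) {p' q' : V}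
    (hp' : A p') (hq' : B q') (hqγ : q' ∉ γ) (hqp : (G ⊔ H).Reachable q' p') :
    q < q' ↔ p < p' := by
  have hclosed : ∀ v ∈ γ, ∀ w, (G ⊔ H).Adj v w → w ∈ γ := by
    rintro v hv w (h | h)
    exacts [hγG.closed v hv w h, hγH.closed v hv w h]
  have hinvariant : ∀ v, Relation.ReflTransGen (G ⊔ H).Adj q' v →
      v ∉ γ ∧ (Odd (γ ∩ Set.Iio q').ncard ↔ Odd (γ ∩ Set.Iio v).ncard) := by
    intro v hv
    induction hv with
    | refl => exact ⟨hqγ, Iff.rfl⟩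
    | tail _ hvw ih =>
      obtain ⟨hv, hodd⟩ := ih
      refine ⟨fun hw => hv (hclosed _ hw _ hvw.symm), hodd.trans ?_⟩
      rcases hvw with hvw | hvw
      · exact hγG.odd_ncard_inter_Iio_iff_of_adj hG hvw hv
      · exact hγH.odd_ncard_inter_Iio_iff_of_adj hH hvw hv
  obtain ⟨hpγ, hodd⟩ := hinvariant p' ((SimpleGraph.reachable_iff_reflTransGen _ _).1 hqp)
  rw [← hγH.odd_ncard_inter_Iio_iff_lt hH hq' hqγ, hodd,
    hγG.odd_ncard_inter_Iio_iff_lt hG hp' hpγ]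

end MatchingParity

section PathEnds

variable {V : Type*} {G H : SimpleGraph V}

lemma sum_degree_add_ncard_isolated [Fintype V] [DecidableRel G.Adj]
    (hG : ∀ v, (G.neighborSet v).Subsingleton) :
    ∑ v, G.degree v + {v | G.neighborSet v = ∅}.ncard = Fintype.card V := by
  classical
  rw [Set.ncard_eq_toFinset_card', Set.toFinset_ofPred, Finset.card_filter,
    ← Finset.sum_add_distrib, Fintype.card_eq_sum_ones]
  refine Finset.sum_congr rfl fun v _ => ?_
  rw [← SimpleGraph.card_neighborSet_eq_degree, ← Nat.card_eq_fintype_card, Nat.card_coe_set_eq]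
  rcases (hG v).eq_empty_or_singleton with h | ⟨w, h⟩ <;> simp [h]

lemma sum_degree_sup_le [Fintype V] [DecidableRel G.Adj] [DecidableRel H.Adj] :
    ∑ v, (G ⊔ H).degree v ≤ ∑ v, G.degree v + ∑ v, H.degree v := by
  classical
  rw [← Finset.sum_add_distrib]
  gcongr with v
  calc (G ⊔ H).degree v = (G.neighborFinset v ∪ H.neighborFinset v).card := by
        rw [← SimpleGraph.card_neighborFinset_eq_degree]
        congr 1
        ext w
        simp
    _ ≤ _ := Finset.card_union_le _ _

lemma two_mul_card_le_sum_degree_add_two [Fintype V] [DecidableRel G.Adj] (hG : G.Connected) :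
    2 * Fintype.card V ≤ ∑ v, G.degree v + 2 := by
  have hedges := hG.card_vert_le_card_edgeSet_add_one
  classical
  rw [Nat.card_eq_fintype_card, Nat.card_eq_fintype_card, ← SimpleGraph.edgeFinset_card] at hedges
  rw [G.sum_degrees_eq_twice_card_edges]
  lia

/-- Counting edges: a connected graph on `m` vertices has at least `m - 1` of them. -/
lemma ncard_isolated_add_ncard_isolated_le_two [Finite V]
    (hG : ∀ v, (G.neighborSet v).Subsingleton) (hH : ∀ v, (H.neighborSet v).Subsingleton)
    (hconn : (G ⊔ H).Connected) :
    {v | G.neighborSet v = ∅}.ncard + {v | H.neighborSet v = ∅}.ncard ≤ 2 := by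
  classical
  have := Fintype.ofFinite V
  have hGH := (two_mul_card_le_sum_degree_add_two hconn).trans
    (Nat.add_le_add_right sum_degree_sup_le 2)
  have hGcard := sum_degree_add_ncard_isolated hG
  have hHcard := sum_degree_add_ncard_isolated hH
  lia

lemma eq_of_connected_of_isolated [Finite V]
    (hG : ∀ v, (G.neighborSet v).Subsingleton) (hH : ∀ v, (H.neighborSet v).Subsingleton)
    (hconn : (G ⊔ H).Connected) {p q q' : V} (hp : G.neighborSet p = ∅)
    (hq : H.neighborSet q = ∅) (hq' : H.neighborSet q' = ∅) : q' = q := by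
  by_contra hne
  have hle := ncard_isolated_add_ncard_isolated_le_two hG hH hconn
  have hpos : 0 < {v | G.neighborSet v = ∅}.ncard := (Set.ncard_pos).2 ⟨p, hp⟩
  have hone : 1 < {v | H.neighborSet v = ∅}.ncard := (Set.one_lt_ncard).2 ⟨q', hq', q, hq, hne⟩
  lia

lemma eq_of_reachable_of_isolated [Finite V]
    (hG : ∀ v, (G.neighborSet v).Subsingleton) (hH : ∀ v, (H.neighborSet v).Subsingleton)
    {p q q' : V} (hp : G.neighborSet p = ∅) (hq : H.neighborSet q = ∅)
    (hq' : H.neighborSet q' = ∅) (hqp : (G ⊔ H).Reachable q p)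
    (hqq' : (G ⊔ H).Reachable q q') : q' = q := by
  let C := (G ⊔ H).connectedComponentMk q
  have hsub : ∀ {K : SimpleGraph V}, (∀ v, (K.neighborSet v).Subsingleton) →
      ∀ v, ((K.induce C.supp).neighborSet v).Subsingleton :=
    fun hK v x hx y hy => Subtype.ext (hK v hx hy)
  have hisolated : ∀ {K : SimpleGraph V} {v : C.supp}, K.neighborSet v = ∅ →
      (K.induce C.supp).neighborSet v = ∅ :=
    fun hv => Set.eq_empty_of_forall_notMem fun w hw => Set.eq_empty_iff_forall_notMem.1 hv w hw
  have hconn : (G.induce C.supp ⊔ H.induce C.supp).Connected := C.connected_toSimpleGraph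
  have hmem : ∀ {v}, (G ⊔ H).Reachable q v → v ∈ C.supp :=
    fun hv => SimpleGraph.ConnectedComponent.sound hv.symm
  exact congrArg Subtype.val (eq_of_connected_of_isolated (hsub hG) (hsub hH) hconn
    (p := ⟨p, hmem hqp⟩) (q := ⟨q, hmem .rfl⟩) (q' := ⟨q', hmem hqq'⟩)
    (hisolated hp) (hisolated hq) (hisolated hq'))

end PathEnds

section InterfaceGraph

variable {n : ℕ} {a : PElt n} {i j p q : Fin n} {θ : Set (Fin n)}

/-- The partial Brauer monoid: partitions, not necessarily planar, all of whose blocks have size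
at most two. -/
def PartialBrauer (n : ℕ) : Set (PElt n) := {a | ∀ x, blockCard a x ≤ 2}

lemma eq_of_rel_of_rel (ha : a ∈ PartialBrauer n) {x y z : PV n} (hxy : a.r x y) (hxz : a.r x z)
    (hne_y : x ≠ y) (hne_z : x ≠ z) : y = z := by
  by_contra hyz
  have hcard : {w | a.r x w}.ncard ≤ 2 := ha x
  exact hcard.not_gt <| (Set.two_lt_ncard_iff).2
    ⟨x, y, z, a.iseqv.refl x, hxy, hxz, hne_y, hne_z, hyz⟩

/-- The involution `α ↦ α*` of the partition monoid, turning diagrams upside down. It exchanges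
the two sides of the interface graph. -/
abbrev pstar (a : PElt n) : PElt n := Setoid.comap Sum.swap a

lemma pstar_mem_partialBrauer (ha : a ∈ PartialBrauer n) : pstar a ∈ PartialBrauer n := by
  intro x
  calc blockCard (pstar a) x = blockCard a x.swap :=
        Nat.card_congr ((Equiv.sumComm _ _).subtypeEquiv fun _ => Iff.rfl)
    _ ≤ 2 := ha _

lemma ordIdx_swap_lt_ordIdx_swap {x y : PV n} (h : ordIdx n x < ordIdx n y) :
    ordIdx n y.swap < ordIdx n x.swap := by
  rcases x with x | x <;> rcases y with y | y <;>
    simp only [ordIdx, Sum.swap_inl, Sum.swap_inr] at h ⊢ <;>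
    lia

lemma isPlanar_pstar (ha : IsPlanar a) : IsPlanar (pstar a) := by
  rintro ⟨w, x, y, z, hwx, hxy, hyz, hrel_wy, hrel_xz, hrel_wx⟩
  refine ha ⟨z.swap, y.swap, x.swap, w.swap, ordIdx_swap_lt_ordIdx_swap hyz,
    ordIdx_swap_lt_ordIdx_swap hxy, ordIdx_swap_lt_ordIdx_swap hwx, a.iseqv.symm hrel_xz,
    a.iseqv.symm hrel_wy, fun hrel_zy => hrel_wx ?_⟩
  exact a.iseqv.trans hrel_wy (a.iseqv.trans (a.iseqv.symm hrel_zy) (a.iseqv.symm hrel_xz))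

/-- The graph of the lower edges of `Γ(α)`. -/
def lowGraph (a : PElt n) : SimpleGraph (Fin n) where
  Adj := LowEdge a
  symm := ⟨fun _ _ h => ⟨h.1.symm, a.iseqv.symm h.2⟩⟩
  loopless := ⟨fun _ h => h.1 rfl⟩

/-- The graph of the upper edges of `Γ(α)`. -/
def upGraph (a : PElt n) : SimpleGraph (Fin n) where
  Adj := UpEdge a
  symm := ⟨fun _ _ h => ⟨h.1.symm, a.iseqv.symm h.2⟩⟩
  loopless := ⟨fun _ h => h.1 rfl⟩

lemma neighborSet_lowGraph_eq_empty : (lowGraph a).neighborSet i = ∅ ↔ ¬ hasLow a i := by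
  rw [← Set.not_nonempty_iff_eq_empty]
  rfl

lemma neighborSet_upGraph_eq_empty : (upGraph a).neighborSet i = ∅ ↔ ¬ hasUp a i :=
  neighborSet_lowGraph_eq_empty (a := pstar a)

lemma subsingleton_neighborSet_lowGraph (ha : a ∈ PartialBrauer n) (i : Fin n) :
    ((lowGraph a).neighborSet i).Subsingleton := fun _ hj _ hk =>
  Sum.inl_injective (eq_of_rel_of_rel ha hj.2 hk.2 (Sum.inl_injective.ne hj.1)
    (Sum.inl_injective.ne hk.1))

lemma subsingleton_neighborSet_upGraph (ha : a ∈ PartialBrauer n) (i : Fin n) :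
    ((upGraph a).neighborSet i).Subsingleton :=
  subsingleton_neighborSet_lowGraph (pstar_mem_partialBrauer ha) i

lemma not_hasLow_of_activeDown (ha : a ∈ PartialBrauer n) (hi : activeDown a i) :
    ¬ hasLow a i := by
  rintro ⟨j, hij⟩
  obtain ⟨k, hik⟩ := hi
  exact Sum.inl_ne_inr
    (eq_of_rel_of_rel ha hij.2 hik (Sum.inl_injective.ne hij.1) Sum.inl_ne_inr)

lemma not_hasUp_of_activeUp (ha : a ∈ PartialBrauer n) (hi : activeUp a i) : ¬ hasUp a i :=
  not_hasLow_of_activeDown (pstar_mem_partialBrauer ha) hi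

lemma inertDown_of_not_hasLow_of_not_activeDown (hlow : ¬ hasLow a i) (hact : ¬ activeDown a i) :
    inertDown a i := by
  rintro (j | j) hij
  · by_contra hne
    exact hlow ⟨j, fun h => hne (h ▸ rfl), hij⟩
  · exact absurd ⟨j, hij⟩ hact

lemma inertUp_of_not_hasUp_of_not_activeUp (hup : ¬ hasUp a i) (hact : ¬ activeUp a i) :
    inertUp a i := by
  rintro (j | j) hij
  · exact absurd ⟨j, hij⟩ hact
  · by_contra hne
    exact hup ⟨j, fun h => hne (h ▸ rfl), hij⟩

lemma isNoncrossingMatching_lowGraph (hplanar : IsPlanar a) (ha : a ∈ PartialBrauer n) :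
    IsNoncrossingMatching (lowGraph a) (activeDown a) where
  subsingleton_neighborSet := subsingleton_neighborSet_lowGraph ha
  mem_Icc := by
    rintro i j hij v ⟨hiv, hvj⟩ w hvw
    have hrel : ¬ a.r (.inl i) (.inl v) := fun h =>
      hvj.ne' (subsingleton_neighborSet_lowGraph ha i hij ⟨hiv.ne, h⟩)
    refine ⟨not_lt.1 fun hwi => ?_, not_lt.1 fun hjw => ?_⟩
    · exact hplanar ⟨.inl w, .inl i, .inl v, .inl j, hwi, hiv, hvj, a.iseqv.symm hvw.2, hij.2,
        fun h => hrel (a.iseqv.symm (a.iseqv.trans hvw.2 h))⟩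
    · exact hplanar ⟨.inl i, .inl v, .inl j, .inl w, hiv, hvj, hjw, hij.2, hvw.2, hrel⟩
  not_active := by
    rintro i j hij v ⟨hiv, hvj⟩ ⟨k, hvk⟩
    have hjk : ordIdx n (.inl j) < ordIdx n (.inr k) := by
      simp only [ordIdx]
      lia
    exact hplanar ⟨.inl i, .inl v, .inl j, .inr k, hiv, hvj, hjk, hij.2, hvk, fun h =>
      hvj.ne' (subsingleton_neighborSet_lowGraph ha i hij ⟨hiv.ne, h⟩)⟩

lemma isNoncrossingMatching_upGraph (hplanar : IsPlanar a) (ha : a ∈ PartialBrauer n) :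
    IsNoncrossingMatching (upGraph a) (activeUp a) :=
  isNoncrossingMatching_lowGraph (isPlanar_pstar hplanar) (pstar_mem_partialBrauer ha)

lemma eq_of_rel_inr (ha : a ∈ PartialBrauer n) (hp : a.r (.inl p) (.inr q))
    (hj : a.r (.inl j) (.inr q)) : p = j := by
  by_contra hne
  exact not_hasLow_of_activeDown ha ⟨q, hp⟩ ⟨j, hne, a.iseqv.trans hp (a.iseqv.symm hj)⟩

lemma lt_of_rel_of_rel_of_lt (hplanar : IsPlanar a) (ha : a ∈ PartialBrauer n) {p' q' : Fin n}
    (hpq : a.r (.inl p) (.inr q)) (hpq' : a.r (.inl p') (.inr q')) (hlt : p < p') : q < q' := by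
  refine lt_of_not_ge fun hle => ?_
  have hpp' : ¬ a.r (.inl p) (.inl p') := fun h =>
    not_hasLow_of_activeDown ha ⟨q, hpq⟩ ⟨p', hlt.ne, h⟩
  rcases hle.lt_or_eq with hlt' | rfl
  · refine hplanar ⟨.inl p, .inl p', .inr q, .inr q', hlt, ?_, ?_, hpq, hpq', hpp'⟩ <;>
    · simp only [ordIdx]
      lia
  · exact hpp' (a.iseqv.trans hpq (a.iseqv.symm hpq'))

lemma gconn.refl (a : PElt n) (i : Fin n) : gconn a i i := EqvGen.refl i

lemma gconn.symm (h : gconn a i j) : gconn a j i := EqvGen.symm _ _ h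

lemma gconn.trans {k : Fin n} (hij : gconn a i j) (hjk : gconn a j k) : gconn a i k :=
  EqvGen.trans _ _ _ hij hjk

lemma gconn_of_rel_inl (h : a.r (.inl i) (.inl j)) : gconn a i j := by
  by_cases hij : i = j
  · exact hij ▸ gconn.refl a i
  · exact EqvGen.rel _ _ (Or.inl ⟨hij, h⟩)

lemma gconn_of_rel_inr (h : a.r (.inr i) (.inr j)) : gconn a i j := by
  by_cases hij : i = j
  · exact hij ▸ gconn.refl a i
  · exact EqvGen.rel _ _ (Or.inr ⟨hij, h⟩)

lemma gconn.reachable (h : gconn a i j) : (lowGraph a ⊔ upGraph a).Reachable i j := by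
  induction h with
  | rel _ _ h => exact SimpleGraph.Adj.reachable h
  | refl _ => exact .rfl
  | symm _ _ _ ih => exact ih.symm
  | trans _ _ _ _ _ ih ih' => exact ih.trans ih'

lemma eq_of_gconn_of_not_hasUp (ha : a ∈ PartialBrauer n) (hp : ¬ hasLow a p) (hq : ¬ hasUp a q)
    (hj : ¬ hasUp a j) (hqp : gconn a q p) (hqj : gconn a q j) : j = q :=
  eq_of_reachable_of_isolated (subsingleton_neighborSet_lowGraph ha)
    (subsingleton_neighborSet_upGraph ha) (neighborSet_lowGraph_eq_empty.2 hp)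
    (neighborSet_upGraph_eq_empty.2 hq) (neighborSet_upGraph_eq_empty.2 hj)
    hqp.reachable hqj.reachable

lemma eq_of_gconn_of_not_hasLow (ha : a ∈ PartialBrauer n) (hq : ¬ hasUp a q) (hp : ¬ hasLow a p)
    (hj : ¬ hasLow a j) (hpq : gconn a p q) (hpj : gconn a p j) : j = p :=
  eq_of_reachable_of_isolated (subsingleton_neighborSet_upGraph ha)
    (subsingleton_neighborSet_lowGraph ha) (neighborSet_upGraph_eq_empty.2 hq)
    (neighborSet_lowGraph_eq_empty.2 hp) (neighborSet_lowGraph_eq_empty.2 hj)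
    (sup_comm (lowGraph a) _ ▸ hpq.reachable) (sup_comm (lowGraph a) _ ▸ hpj.reachable)

lemma IsComp.gconn_of_mem (hθ : IsComp a θ) (hi : i ∈ θ) (hj : j ∈ θ) : gconn a i j :=
  (hθ.2 i hi j).2 hj

lemma IsComp.mem_of_gconn (hθ : IsComp a θ) (hi : i ∈ θ) (hij : gconn a i j) : j ∈ θ :=
  (hθ.2 i hi j).1 hij

lemma isComp_setOf_gconn (a : PElt n) (i : Fin n) : IsComp a {j | gconn a i j} :=
  ⟨⟨i, gconn.refl a i⟩, fun _ hj _ => ⟨hj.trans, hj.symm.trans⟩⟩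

end InterfaceGraph

section Transversals

variable {n : ℕ} {a : PElt n} {p q : Fin n} {θ : Set (Fin n)}

/-- Each transversal `{p, q′}` is closed up by the interface graph: its two ends `p` and `q` lie in
the same component of `Γ(α)`. This property mediates between idempotency and the types of the
components. -/
def TransversalsClose (a : PElt n) : Prop := ∀ p q, a.r (.inl p) (.inr q) → gconn a q p

lemma IsComp.isCycleComp_or_isInertPathComp (hθ : IsComp a θ)
    (hdown : ∀ i ∈ θ, ¬ activeDown a i) (hup : ∀ i ∈ θ, ¬ activeUp a i) :
    IsCycleComp a θ ∨ IsInertPathComp a θ := by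
  by_cases hcycle : ∀ i ∈ θ, hasLow a i ∧ hasUp a i
  · exact Or.inl ⟨hθ, hcycle⟩
  · push Not at hcycle
    refine Or.inr ⟨⟨hθ, by simpa only [imp_iff_not_or] using hcycle⟩,
      fun i hi => ⟨fun h => ?_, fun h => ?_⟩⟩
    · exact inertDown_of_not_hasLow_of_not_activeDown h (hdown i hi)
    · exact inertUp_of_not_hasUp_of_not_activeUp h (hup i hi)

lemma IsComp.isTransActivePathComp (ha : a ∈ PartialBrauer n) (hθ : IsComp a θ) (hpθ : p ∈ θ)
    (hqθ : q ∈ θ) (hp : activeDown a p) (hq : activeUp a q) : IsTransActivePathComp a θ := by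
  have hp_low := not_hasLow_of_activeDown ha hp
  have hq_up := not_hasUp_of_activeUp ha hq
  have hlow_unique : ∀ i ∈ θ, ¬ hasLow a i → i = p := fun i hi h =>
    eq_of_gconn_of_not_hasLow ha hq_up hp_low h (hθ.gconn_of_mem hpθ hqθ) (hθ.gconn_of_mem hpθ hi)
  have hup_unique : ∀ i ∈ θ, ¬ hasUp a i → i = q := fun i hi h =>
    eq_of_gconn_of_not_hasUp ha hp_low hq_up h (hθ.gconn_of_mem hqθ hpθ) (hθ.gconn_of_mem hqθ hi)
  exact ⟨⟨hθ, p, hpθ, Or.inl hp_low⟩, ⟨p, ⟨hpθ, hp_low⟩, fun i hi => hlow_unique i hi.1 hi.2⟩,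
    ⟨q, ⟨hqθ, hq_up⟩, fun i hi => hup_unique i hi.1 hi.2⟩,
    fun i hi => ⟨fun h => hlow_unique i hi h ▸ hp, fun h => hup_unique i hi h ▸ hq⟩⟩

lemma TransversalsClose.component_cases (h : TransversalsClose a) (ha : a ∈ PartialBrauer n)
    (hθ : IsComp a θ) :
    IsCycleComp a θ ∨ IsInertPathComp a θ ∨ IsTransActivePathComp a θ := by
  by_cases hup : ∃ q ∈ θ, activeUp a q
  · obtain ⟨q, hq, p, hqp⟩ := hup
    have hpq := a.iseqv.symm hqp
    exact Or.inr <| Or.inr <|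
      hθ.isTransActivePathComp ha (hθ.mem_of_gconn hq (h p q hpq)) hq ⟨q, hpq⟩ ⟨p, hqp⟩
  · push Not at hup
    have hdown : ∀ i ∈ θ, ¬ activeDown a i := fun i hi ⟨j, hij⟩ =>
      hup j (hθ.mem_of_gconn hi (h i j hij).symm) ⟨i, a.iseqv.symm hij⟩
    exact or_assoc.1 (Or.inl (hθ.isCycleComp_or_isInertPathComp hdown hup))

lemma isTransActivePathComp_of_activeUp (ha : a ∈ PartialBrauer n)
    (hcases : IsCycleComp a θ ∨ IsInertPathComp a θ ∨ IsTransActivePathComp a θ) (hqθ : q ∈ θ)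
    (hq : activeUp a q) : IsTransActivePathComp a θ := by
  have hq_up := not_hasUp_of_activeUp ha hq
  rcases hcases with hcycle | hinert | htrans
  · exact absurd (hcycle.2 q hqθ).2 hq_up
  · obtain ⟨p, hqp⟩ := hq
    exact absurd ((hinert.2 q hqθ).2 hq_up _ hqp) Sum.inl_ne_inr
  · exact htrans

lemma IsTransActivePathComp.isActiveStrand_lowGraph (ha : a ∈ PartialBrauer n)
    (hθ : IsTransActivePathComp a θ) (hpθ : p ∈ θ) (hp : activeDown a p) :
    IsActiveStrand (lowGraph a) (activeDown a) θ p where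
  closed := fun _ hv _ hvw => hθ.1.1.mem_of_gconn hv (EqvGen.rel _ _ (Or.inl hvw))
  mem := hpθ
  exists_adj_iff := fun v hv => by
    have hp_low := not_hasLow_of_activeDown ha hp
    refine ⟨fun h hvp => hp_low (hvp ▸ h), fun hvp => ?_⟩
    by_contra h
    exact hvp (hθ.2.1.unique ⟨hv, h⟩ ⟨hpθ, hp_low⟩)
  active := hp

lemma IsTransActivePathComp.isActiveStrand_upGraph (ha : a ∈ PartialBrauer n)
    (hθ : IsTransActivePathComp a θ) (hqθ : q ∈ θ) (hq : activeUp a q) :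
    IsActiveStrand (upGraph a) (activeUp a) θ q where
  closed := fun _ hv _ hvw => hθ.1.1.mem_of_gconn hv (EqvGen.rel _ _ (Or.inr hvw))
  mem := hqθ
  exists_adj_iff := fun v hv => by
    have hq_up := not_hasUp_of_activeUp ha hq
    refine ⟨fun h hvq => hq_up (hvq ▸ h), fun hvq => ?_⟩
    by_contra h
    exact hvq (hθ.2.2.1.unique ⟨hv, h⟩ ⟨hqθ, hq_up⟩)
  active := hq

lemma IsTransActivePathComp.lt_of_lt (hplanar : IsPlanar a) (ha : a ∈ PartialBrauer n)
    (hθ : IsTransActivePathComp a θ) {p' q' : Fin n} (hpθ : p ∈ θ) (hqθ : q ∈ θ)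
    (hp : activeDown a p) (hq : activeUp a q) (hp' : activeDown a p') (hq' : activeUp a q')
    (hqp' : gconn a q' p') (hlt : q < q') : p < p' := by
  have hqθ' : q' ∉ θ := fun h => hlt.ne <| hθ.2.2.1.unique
    ⟨hqθ, not_hasUp_of_activeUp ha hq⟩ ⟨h, not_hasUp_of_activeUp ha hq'⟩
  exact ((hθ.isActiveStrand_lowGraph ha hpθ hp).lt_iff_lt (hθ.isActiveStrand_upGraph ha hqθ hq)
    (isNoncrossingMatching_lowGraph hplanar ha) (isNoncrossingMatching_upGraph hplanar ha) hp' hq'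
    hqθ' hqp'.reachable).1 hlt

lemma transversalsClose_of_isTransActivePathComp (hplanar : IsPlanar a) (ha : a ∈ PartialBrauer n)
    (htrans : ∀ q, activeUp a q → IsTransActivePathComp a {j | gconn a q j}) :
    TransversalsClose a := by
  have hexit : ∀ q : {q // activeUp a q}, ∃ p r, gconn a q.1 p ∧ a.r (.inl p) (.inr r) := by
    rintro ⟨q, hq⟩
    obtain ⟨p, ⟨hqp, hp⟩, -⟩ := (htrans q hq).2.1
    obtain ⟨r, hpr⟩ := ((htrans q hq).2.2.2 p hqp).1 hp
    exact ⟨p, r, hqp, hpr⟩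
  choose path trans hpath htransversal using hexit
  let next : {q // activeUp a q} → {q // activeUp a q} :=
    fun q => ⟨trans q, path q, a.iseqv.symm (htransversal q)⟩
  have hnext : StrictMono next := fun q q' hlt =>
    lt_of_rel_of_rel_of_lt hplanar ha (htransversal q) (htransversal q') <|
      (htrans q q.2).lt_of_lt hplanar ha (hpath q) (gconn.refl a q) ⟨_, htransversal q⟩ q.2
        ⟨_, htransversal q'⟩ q'.2 (hpath q') hlt
  intro p q hpq
  let q₀ : {q // activeUp a q} := ⟨q, p, a.iseqv.symm hpq⟩
  have hfix : trans q₀ = q := congrArg Subtype.val (le_antisymm hnext.apply_le hnext.le_apply)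
  have hp : p = path q₀ := eq_of_rel_inr ha hpq (hfix ▸ htransversal q₀)
  exact hp ▸ hpath q₀

lemma transversalsClose_iff (hplanar : IsPlanar a) (ha : a ∈ PartialBrauer n) :
    TransversalsClose a ↔ ∀ θ, IsComp a θ →
      IsCycleComp a θ ∨ IsInertPathComp a θ ∨ IsTransActivePathComp a θ :=
  ⟨fun h _ => h.component_cases ha, fun h =>
    transversalsClose_of_isTransActivePathComp hplanar ha fun q hq =>
      isTransActivePathComp_of_activeUp ha (h _ (isComp_setOf_gconn a q)) (gconn.refl a q) hq⟩

end Transversals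

section Product

variable {n : ℕ} {a b : PElt n} {i j p q : Fin n}

lemma stackSetoid_upEmb (b : PElt n) {x y : PV n} (h : a.r x y) :
    (stackSetoid a b).r (upEmb x) (upEmb y) :=
  EqvGen.rel _ _ (Or.inl ⟨x, y, h, rfl, rfl⟩)

lemma stackSetoid_downEmb (a : PElt n) {x y : PV n} (h : b.r x y) :
    (stackSetoid a b).r (downEmb x) (downEmb y) :=
  EqvGen.rel _ _ (Or.inr ⟨x, y, h, rfl, rfl⟩)

lemma gconn.stackSetoid_middle (h : gconn a i j) :
    (stackSetoid a a).r (.inr (.inl i)) (.inr (.inl j)) := by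
  induction h with
  | rel _ _ h =>
    rcases h with h | h
    · exact stackSetoid_downEmb a h.2
    · exact stackSetoid_upEmb a h.2
  | refl _ => exact EqvGen.refl _
  | symm _ _ _ ih => exact EqvGen.symm _ _ ih
  | trans _ _ _ _ _ ih ih' => exact EqvGen.trans _ _ _ ih ih'

lemma eq_of_stackSetoid {β : Type*} {f : TV n → β}
    (hup : ∀ x y, a.r x y → f (upEmb x) = f (upEmb y))
    (hdown : ∀ x y, b.r x y → f (downEmb x) = f (downEmb y)) {x y : TV n}
    (h : (stackSetoid a b).r x y) : f x = f y := by
  refine Setoid.eqvGen_le (s := Setoid.ker f) ?_ h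
  rintro _ _ (⟨x, y, hxy, rfl, rfl⟩ | ⟨x, y, hxy, rfl, rfl⟩)
  exacts [hup x y hxy, hdown x y hxy]

lemma forall_rel_imp_eq {β : Type*} {f : PV n → β}
    (hll : ∀ i j, a.r (.inl i) (.inl j) → f (.inl i) = f (.inl j))
    (hlr : ∀ i j, a.r (.inl i) (.inr j) → f (.inl i) = f (.inr j))
    (hrr : ∀ i j, a.r (.inr i) (.inr j) → f (.inr i) = f (.inr j)) :
    ∀ x y, a.r x y → f x = f y := by
  rintro (i | i) (j | j) h
  exacts [hll i j h, hlr i j h, (hlr j i (a.iseqv.symm h)).symm, hrr i j h]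

lemma transversalsClose_of_pmul_self_eq (h : pmul a a = a) : TransversalsClose a := by
  intro p q hpq
  have hrel : ∀ x y, a.r x y ↔ (stackSetoid a a).r (outEmb x) (outEmb y) := fun x y => by
    conv_lhs => rw [← h]
    rfl
  have hmiddle : ∀ {i j}, gconn a i j → gconn a q i = gconn a q j := fun hij =>
    propext ⟨fun hi => hi.trans hij, fun hj => hj.trans hij.symm⟩
  -- `f` holds exactly on the component of the stacked diagram through the upper vertex `p`.
  let f : TV n → Prop := Sum.elim (fun j => a.r (.inl p) (.inl j))
    (Sum.elim (gconn a q) fun j => ∃ k, gconn a q k ∧ a.r (.inl k) (.inr j))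
  have hup : ∀ x y, a.r x y → f (upEmb x) = f (upEmb y) := by
    refine forall_rel_imp_eq (fun i j hij => ?_) (fun i j hij => ?_) fun i j hij => ?_
    · exact propext ⟨fun hi => a.iseqv.trans hi hij, fun hj => a.iseqv.trans hj (a.iseqv.symm hij)⟩
    · refine propext ⟨fun hi => ?_, fun hj => (hrel (.inl p) (.inl i)).2 ?_⟩
      · exact gconn_of_rel_inr (a.iseqv.trans (a.iseqv.symm hpq) (a.iseqv.trans hi hij))
      · exact EqvGen.trans _ _ _ (stackSetoid_upEmb a hpq) <| EqvGen.trans _ _ _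
          hj.stackSetoid_middle (stackSetoid_upEmb a (a.iseqv.symm hij))
    · exact hmiddle (gconn_of_rel_inr hij)
  have hdown : ∀ x y, a.r x y → f (downEmb x) = f (downEmb y) := by
    refine forall_rel_imp_eq (fun i j hij => ?_) (fun i j hij => ?_) fun i j hij => ?_
    · exact hmiddle (gconn_of_rel_inl hij)
    · exact propext ⟨fun hi => ⟨i, hi, hij⟩, fun ⟨k, hk, hkj⟩ =>
        hk.trans (gconn_of_rel_inl (a.iseqv.trans hkj (a.iseqv.symm hij)))⟩
    · exact propext ⟨fun ⟨k, hk, hki⟩ => ⟨k, hk, a.iseqv.trans hki hij⟩,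
        fun ⟨k, hk, hkj⟩ => ⟨k, hk, a.iseqv.trans hkj (a.iseqv.symm hij)⟩⟩
  obtain ⟨k, hqk, hkq⟩ : f (.inr (.inr q)) :=
    (eq_of_stackSetoid hup hdown ((hrel _ _).1 hpq)).mp (a.iseqv.refl (.inl p))
  exact hqk.trans (gconn_of_rel_inl (a.iseqv.trans hkq (a.iseqv.symm hpq)))

lemma TransversalsClose.le_pmul_self (h : TransversalsClose a) : a ≤ pmul a a := by
  have htrans : ∀ p q, a.r (.inl p) (.inr q) →
      (stackSetoid a a).r (outEmb (.inl p)) (outEmb (.inr q)) := fun p q hpq =>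
    EqvGen.trans _ _ _ (stackSetoid_upEmb a hpq) <| EqvGen.trans _ _ _
      (h p q hpq).stackSetoid_middle (stackSetoid_downEmb a hpq)
  rintro (i | i) (j | j) hij
  · exact stackSetoid_upEmb a hij
  · exact htrans i j hij
  · exact EqvGen.symm _ _ (htrans j i (a.iseqv.symm hij))
  · exact stackSetoid_downEmb a hij

/-- The block of `α` to which a vertex of the stacked diagram of `αα` belongs if each path of
`Γ(α)` in the middle row is contracted to its terminus that is active upwards (the empty set if
there is none). -/
def stackClass (a : PElt n) : TV n → Set (PV n)
  | .inl i => {y | a.r (.inl i) y}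
  | .inr (.inl i) => {y | ∃ q, gconn a i q ∧ activeUp a q ∧ a.r (.inr q) y}
  | .inr (.inr i) => {y | a.r (.inr i) y}

lemma setOf_rel_eq {x y : PV n} (h : a.r x y) : {z | a.r x z} = {z | a.r y z} :=
  Set.ext fun _ => ⟨a.iseqv.trans (a.iseqv.symm h), a.iseqv.trans h⟩

lemma stackClass_middle_eq_of_gconn (h : gconn a i j) :
    stackClass a (.inr (.inl i)) = stackClass a (.inr (.inl j)) :=
  Set.ext fun _ => ⟨fun ⟨q, hiq, hq⟩ => ⟨q, h.symm.trans hiq, hq⟩,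
    fun ⟨q, hjq, hq⟩ => ⟨q, h.trans hjq, hq⟩⟩

lemma TransversalsClose.stackClass_middle (h : TransversalsClose a) (ha : a ∈ PartialBrauer n)
    (hpq : a.r (.inl p) (.inr q)) : stackClass a (.inr (.inl q)) = {y | a.r (.inr q) y} := by
  have hq : activeUp a q := ⟨p, a.iseqv.symm hpq⟩
  refine Set.ext fun y => ⟨?_, fun hy => ⟨q, gconn.refl a q, hq, hy⟩⟩
  rintro ⟨r, hqr, hr, hry⟩
  have hrq : r = q := eq_of_gconn_of_not_hasUp ha (not_hasLow_of_activeDown ha ⟨q, hpq⟩)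
    (not_hasUp_of_activeUp ha hq) (not_hasUp_of_activeUp ha hr) (h p q hpq) hqr
  exact hrq ▸ hry

lemma TransversalsClose.pmul_self_le (h : TransversalsClose a) (ha : a ∈ PartialBrauer n) :
    pmul a a ≤ a := by
  have hup : ∀ x y, a.r x y → stackClass a (upEmb x) = stackClass a (upEmb y) :=
    forall_rel_imp_eq (fun i j hij => setOf_rel_eq hij)
      (fun i j hij => (setOf_rel_eq hij).trans (h.stackClass_middle ha hij).symm)
      fun i j hij => stackClass_middle_eq_of_gconn (gconn_of_rel_inr hij)
  have hdown : ∀ x y, a.r x y → stackClass a (downEmb x) = stackClass a (downEmb y) :=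
    forall_rel_imp_eq (fun i j hij => stackClass_middle_eq_of_gconn (gconn_of_rel_inl hij))
      (fun i j hij => (stackClass_middle_eq_of_gconn (h i j hij).symm).trans
        (h.stackClass_middle ha hij))
      fun i j hij => setOf_rel_eq hij
  have hout : ∀ x, stackClass a (outEmb x) = {y | a.r x y} := by
    rintro (i | i) <;> rfl
  intro x y hxy
  have hclass : {z | a.r x z} = {z | a.r y z} :=
    (hout x).symm.trans ((eq_of_stackSetoid hup hdown hxy).trans (hout y))
  exact hclass.symm.subset (a.iseqv.refl y)

lemma pmul_self_eq_iff_transversalsClose (ha : a ∈ PartialBrauer n) :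
    pmul a a = a ↔ TransversalsClose a :=
  ⟨transversalsClose_of_pmul_self_eq, fun h => le_antisymm (h.pmul_self_le ha) h.le_pmul_self⟩

end Product

/-- Proposition 2.1. Let `n ≥ 1` and `α ∈ M_n`. Then `α` is idempotent
if and only if every connected component of the interface graph `Γ(α)` is a cycle, an
inert path, or a trans-active path. -/
theorem motzkin_idempotent_iff (n : ℕ) (hn : 1 ≤ n) (a : PElt n) (ha : a ∈ Motzkin n) :
    pmul a a = a ↔ ∀ θ : Set (Fin n), IsComp a θ →
      IsCycleComp a θ ∨ IsInertPathComp a θ ∨ IsTransActivePathComp a θ := by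
  rw [pmul_self_eq_iff_transversalsClose ha.2, transversalsClose_iff ha.1 ha.2]
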